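/- Let J ⊆ Δ. For each w ∈ V^J with w ≠ z^J there exist w' ∈ V^J and s ∈ S such that w <_J w', ℓ((sw)^J) < ℓ(w), and ℓ((sw')^J) ≥ ℓ(w'). -/

import Mathlib

/-! Common framework: a reduced (crystallographic) root system `Φ` in a real vector
space `V`, with Weyl group `W` (generated by the reflections `s_α`, `α ∈ Φ`, inside the
group of linear automorphisms of `V`), a base `Δ` of simple roots with positive system
`Pos = Φ⁺`, and the associated combinatorics. -/

open scoped Classical Pointwise

namespace PaperSp

variable {V : Type} [AddCommGroup V] [Module ℝ V]

/-- The data of a reduced crystallographic root system in `V`:  a finite spanning set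
`Phi` of nonzero vectors together with, for each root `α`, a linear functional
`pairing α = ⟨·, α∨⟩` taking the value `2` at `α`, such that the associated reflections
`s_α : β ↦ β − ⟨β, α∨⟩α` preserve `Phi`, all pairings are integral, and the only
multiples of a root `α` which are roots are `±α`. -/
structure RootSystemData (V : Type) [AddCommGroup V] [Module ℝ V] : Type where
  Phi : Set V
  pairing : V → V →ₗ[ℝ] ℝ
  pairing_self : ∀ α, α ∈ Phi → pairing α α = 2
  finite : Phi.Finite
  span_top : Submodule.span ℝ Phi = ⊤
  zero_not_mem : (0 : V) ∉ Phi
  crystallographic : ∀ α ∈ Phi, ∀ β ∈ Phi, ∃ n : ℤ, pairing α β = (n : ℝ)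
  reduced : ∀ α ∈ Phi, ∀ t : ℝ, t • α ∈ Phi → t = 1 ∨ t = -1
  reflect_mem : ∀ α ∈ Phi, ∀ β ∈ Phi, β - pairing α β • α ∈ Phi

/-- The reflection `s_α` associated to a root `α` (the identity if `α ∉ Φ`). -/
noncomputable def RootSystemData.refl (R : RootSystemData V) (α : V) : V ≃ₗ[ℝ] V :=
  if h : α ∈ R.Phi then Module.reflection (R.pairing_self α h) else 1

/-- The set of reflections `{s_α : α ∈ K}` associated to a set `K` of roots. -/
noncomputable def refls (R : RootSystemData V) (K : Set V) : Set (V ≃ₗ[ℝ] V) :=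
  {s | ∃ α ∈ K, s = R.refl α}

/-- The Weyl group `W`, generated by all reflections `s_α`, `α ∈ Φ`. -/
noncomputable def weylGroup (R : RootSystemData V) : Subgroup (V ≃ₗ[ℝ] V) :=
  Subgroup.closure (refls R R.Phi)

/-- The subgroup `W_J` generated by the reflections `s_α`, `α ∈ J`. -/
noncomputable def WsubJ (R : RootSystemData V) (J : Set V) : Subgroup (V ≃ₗ[ℝ] V) :=
  Subgroup.closure (refls R J)

/-- The word length of `w` with respect to a generating set `S` of a group. -/
noncomputable def lengthWrt {G : Type*} [Group G] (S : Set G) (w : G) : ℕ :=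
  sInf {n | ∃ ls : List G, ls.length = n ∧ (∀ x ∈ ls, x ∈ S) ∧ ls.prod = w}

/-- The length function `ℓ` on `W` with respect to the simple reflections
`S = {s_α : α ∈ Δ}`. -/
noncomputable def len (R : RootSystemData V) (Δ : Set V) (w : V ≃ₗ[ℝ] V) : ℕ :=
  lengthWrt (refls R Δ) w

/-- `Pos` and `Δ` form a positive system with base `Δ` for the root system `R`:
`Φ = Pos ⊔ (−Pos)`, `Δ ⊆ Pos` is linearly independent, and every positive root is a
nonnegative integral combination of simple roots. -/
structure IsBase (R : RootSystemData V) (Pos Δ : Set V) : Prop where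
  pos_sub : Pos ⊆ R.Phi
  mem_or_neg : ∀ α ∈ R.Phi, α ∈ Pos ∨ -α ∈ Pos
  not_both : ∀ α : V, ¬(α ∈ Pos ∧ -α ∈ Pos)
  delta_sub : Δ ⊆ Pos
  indep : LinearIndependent ℝ (fun a : Δ => (a : V))
  decomp : ∀ β ∈ Pos, ∃ c : V →₀ ℕ, (c.support : Set V) ⊆ Δ ∧
    β = c.sum (fun a m => (m : ℝ) • a)

/-- The set `W^J = {w ∈ W : w(α) ∈ Φ⁺ for all α ∈ J}` of minimal length representatives
of `W/W_J`. -/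
noncomputable def WupJ (R : RootSystemData V) (Pos : Set V) (J : Set V) :
    Set (V ≃ₗ[ℝ] V) :=
  {w | w ∈ weylGroup R ∧ ∀ α ∈ J, w α ∈ Pos}

/-- The set `V^J = W^J \ ⋃_{α ∈ Δ\J} W^{J∪{α}}`. -/
noncomputable def VupJ (R : RootSystemData V) (Pos Δ : Set V) (J : Set V) :
    Set (V ≃ₗ[ℝ] V) :=
  {w | w ∈ WupJ R Pos J ∧ ∀ α ∈ Δ, α ∉ J → w ∉ WupJ R Pos (J ∪ {α})}

/-- `Φ_J(1) = Φ⁻ \ (Φ⁻ ∩ W_J·J)`. -/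
noncomputable def PhiJone (R : RootSystemData V) (Pos : Set V) (J : Set V) : Set V :=
  (R.Phi \ Pos) \ {β | ∃ v ∈ WsubJ R J, ∃ α ∈ J, β = v α}

/-- `Φ_J(w) = w · Φ_J(1)`. -/
noncomputable def PhiJ (R : RootSystemData V) (Pos : Set V) (J : Set V)
    (w : V ≃ₗ[ℝ] V) : Set V :=
  (fun x => w x) '' (PhiJone R Pos J)

/-- `hProjJ R Pos J pJ` says that `pJ` is the projection `w ↦ (w)^J` sending an element
of `W` to the unique element of `W^J` in the coset `w W_J`. -/
noncomputable def IsProjJ (R : RootSystemData V) (Pos : Set V) (J : Set V)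
    (pJ : (V ≃ₗ[ℝ] V) → (V ≃ₗ[ℝ] V)) : Prop :=
  ∀ w ∈ weylGroup R, pJ w ∈ WupJ R Pos J ∧ (pJ w)⁻¹ * w ∈ WsubJ R J

/-- The product `s_i ⋯ s_1` of the first `i` members of a sequence in a group. -/
noncomputable def chainProd {G : Type*} [Group G] (s : ℕ → G) (i : ℕ) : G :=
  (((List.range' 1 i).map s).reverse).prod

/-- The chain `w^(0) = w`, `w^(i) = (s_i ⋯ s_1 w)^J` associated to `w` and a sequence
of simple reflections. -/
noncomputable def chainElt {G : Type*} [Group G] (pJ : G → G) (s : ℕ → G) (w : G)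
    (i : ℕ) : G :=
  if i = 0 then w else pJ (chainProd s i * w)

/-- The partial order `<_J`:  `w <_J w'` iff there are simple reflections
`s_1, …, s_r` (`r ≥ 1`) such that, with `w^(i) = (s_i ⋯ s_1 w)^J`, the lengths
`ℓ(w^(i))` are strictly increasing and `w^(r) = w'`.  Taking `pJ = id`
(and `J = ∅`) gives the weak left order `<_∅`. -/
noncomputable def ltJ {G : Type*} [Group G] (S : Set G) (ℓ : G → ℕ) (pJ : G → G)
    (w w' : G) : Prop :=
  ∃ r : ℕ, 1 ≤ r ∧ ∃ s : ℕ → G,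
    (∀ m, 1 ≤ m → m ≤ r → s m ∈ S) ∧
    (∀ m, 1 ≤ m → m ≤ r → ℓ (chainElt pJ s w (m - 1)) < ℓ (chainElt pJ s w m)) ∧
    chainElt pJ s w r = w'

/-- `w` is the longest element of a subgroup `H` of `W` (with respect to `ℓ`). -/
noncomputable def IsLongestIn (R : RootSystemData V) (Δ : Set V)
    (H : Subgroup (V ≃ₗ[ℝ] V)) (w : V ≃ₗ[ℝ] V) : Prop :=
  w ∈ H ∧ ∀ v ∈ H, len R Δ v ≤ len R Δ w

end PaperSp

namespace PaperSp

/-!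
Let `E` be the set of simple roots `a` with `w⁻¹ a` positive. Starting from `w`, multiply on the
left by reflections `s_a`, `a ∈ E`, as long as this increases the length and changes the coset of
`W_J`; this stays inside `V^J` and ends at some `w'`. If some simple root `d ∉ E` has `w'⁻¹ d`
positive, then `w'` and `s_d` are as required.

Otherwise no simple reflection leads from `w'` upwards in `W^J`, so `w' = z^J`. In this case
`z^J ∈ W_E w`, and `-w_Δ J ⊆ E` because `z^J⁻¹` maps `-w_Δ J` into the positive roots. Conjugating
`w_J` by `w_Δ` gives `w w_Δ⁻¹ ∈ W_E`. This element makes every root of `E` negative since its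
inverse does, and as `w ∈ V^J` this forces `-w_Δ⁻¹ E ⊆ J`. Conjugating `z^J w⁻¹ ∈ W_E` by `w_Δ⁻¹`
now gives `w⁻¹ z^J ∈ W_J`, hence `w = z^J`.
-/

section RootSystem

variable {V : Type} [AddCommGroup V] [Module ℝ V] (R : RootSystemData V)

namespace RootSystemData

theorem finiteDimensional (R : RootSystemData V) : FiniteDimensional ℝ V :=
  ⟨R.span_top ▸ Submodule.fg_span R.finite⟩

instance : Finite R.Phi := R.finite

theorem mapsTo_preReflection {α : V} (hα : α ∈ R.Phi) :
    Set.MapsTo (Module.preReflection α (R.pairing α)) R.Phi R.Phi :=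
  fun β hβ => by simpa only [Module.preReflection_apply] using R.reflect_mem α hα β hβ

theorem pairing_injOn : Set.InjOn R.pairing R.Phi := by
  intro α hα β hβ h
  have : IsAddTorsionFree V := .of_isTorsionFree ℝ V
  exact Module.eq_of_mapsTo_reflection_of_mem R.finite (R.pairing_self α hα)
    (R.pairing_self β hβ) (h ▸ R.pairing_self α hα) (h ▸ R.pairing_self β hβ)
    (R.mapsTo_preReflection hα) (R.mapsTo_preReflection hβ) hβ

/-- The root system `R` in Mathlib's sense, indexed by its roots; the coroot of `α` is the
functional `R.pairing α`. -/
noncomputable def toRootPairing : RootPairing R.Phi ℝ V (Module.Dual ℝ V) :=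
  haveI := R.finiteDimensional
  RootPairing.mk'' (Module.Dual.eval ℝ V) (.subtype _)
    ⟨fun α => R.pairing α, R.pairing_injOn.injective⟩
    (fun α => R.pairing_self α α.2)
    (fun α => by
      rw [Function.Embedding.coe_subtype, Subtype.range_coe]
      exact R.mapsTo_preReflection α.2)
    (by simpa using R.span_top)

theorem toRootPairing_root (α : R.Phi) : R.toRootPairing.root α = α := rfl

theorem toRootPairing_pairing (α β : R.Phi) :
    R.toRootPairing.pairing α β = R.pairing β α := rfl

instance : R.toRootPairing.IsCrystallographic :=
  ⟨fun α β => (R.crystallographic β β.2 α α.2).imp fun _ h => by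
    simp [toRootPairing_pairing, h]⟩

instance : R.toRootPairing.IsRootSystem :=
  have := R.finiteDimensional
  RootPairing.isRootSystem_mk'' fun α β =>
    (R.crystallographic β β.2 α α.2).imp fun _ h => h.symm

instance : R.toRootPairing.IsReduced where
  eq_or_eq_neg α β h := by
    have hα : (α : V) ≠ 0 := fun h0 => R.zero_not_mem (h0 ▸ α.2)
    obtain ⟨t, ht⟩ : ∃ t : ℝ, t • (α : V) = β := by
      simpa [LinearIndependent.pair_iff' hα, toRootPairing_root] using h
    rcases R.reduced α α.2 t (ht ▸ β.2) with rfl | rfl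
    · exact .inl (by simpa [toRootPairing_root] using ht)
    · exact .inr (by simp [toRootPairing_root, ← ht])

theorem refl_eq_reflection (α : R.Phi) : R.refl α = R.toRootPairing.reflection α := by
  simp only [refl, α.2, dif_pos]
  rfl

theorem coe_reflectionPerm (α β : R.Phi) :
    (R.toRootPairing.reflectionPerm α β : V) = R.refl α β := by
  rw [refl_eq_reflection, ← toRootPairing_root, ← toRootPairing_root,
    RootPairing.root_reflectionPerm]

variable {R} {α β : V} {g : V ≃ₗ[ℝ] V}

theorem refl_apply (hα : α ∈ R.Phi) (x : V) : R.refl α x = x - R.pairing α x • α := by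
  simp [refl, hα, Module.reflection_apply]

theorem refl_self (hα : α ∈ R.Phi) : R.refl α α = -α := by
  simp [refl, hα, Module.reflection_apply_self]

theorem refl_mul_self (hα : α ∈ R.Phi) : R.refl α * R.refl α = 1 := by
  ext x
  simp only [refl, hα, dif_pos]
  exact Module.involutive_reflection _ x

theorem refl_inv (hα : α ∈ R.Phi) : (R.refl α)⁻¹ = R.refl α :=
  inv_eq_of_mul_eq_one_left (refl_mul_self hα)

theorem refl_mem_weylGroup (hα : α ∈ R.Phi) : R.refl α ∈ weylGroup R :=
  Subgroup.subset_closure ⟨α, hα, rfl⟩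

theorem refl_mem_WsubJ {K : Set V} (hα : α ∈ K) : R.refl α ∈ WsubJ R K :=
  Subgroup.subset_closure ⟨α, hα, rfl⟩

theorem WsubJ_mono {K L : Set V} (h : K ⊆ L) : WsubJ R K ≤ WsubJ R L :=
  Subgroup.closure_mono fun _ ⟨α, hα, e⟩ => ⟨α, h hα, e⟩

theorem WsubJ_le_weylGroup {K : Set V} (h : K ⊆ R.Phi) : WsubJ R K ≤ weylGroup R :=
  WsubJ_mono h

theorem WsubJ_induction {K : Set V} (hK : K ⊆ R.Phi) {p : ∀ g, g ∈ WsubJ R K → Prop}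
    (one : p 1 (one_mem _))
    (refl_mul : ∀ α (hα : α ∈ K) g hg, p g hg → p (R.refl α * g) (mul_mem (refl_mem_WsubJ hα) hg))
    {g : V ≃ₗ[ℝ] V} (hg : g ∈ WsubJ R K) : p g hg := by
  induction hg using Subgroup.closure_induction_left with
  | one => exact one
  | mul_left x hx y hy ih => obtain ⟨α, hα, rfl⟩ := hx; exact refl_mul α hα y hy ih
  | inv_mul_cancel x hx y hy ih =>
    obtain ⟨α, hα, rfl⟩ := hx
    simp only [refl_inv (hK hα)]
    exact refl_mul α hα y hy ih

theorem apply_mem_Phi (hg : g ∈ weylGroup R) (hβ : β ∈ R.Phi) : g β ∈ R.Phi := by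
  change g ∈ WsubJ R R.Phi at hg
  induction hg using WsubJ_induction subset_rfl with
  | one => exact hβ
  | refl_mul α hα g hg ih =>
    rw [LinearEquiv.mul_apply, refl_apply hα]
    exact R.reflect_mem α hα _ ih

theorem neg_mem_Phi (hβ : β ∈ R.Phi) : -β ∈ R.Phi :=
  refl_self hβ ▸ apply_mem_Phi (refl_mem_weylGroup hβ) hβ

theorem refl_refl_apply (hα : α ∈ R.Phi) (hβ : β ∈ R.Phi) :
    R.refl (R.refl α β) = R.refl α * R.refl β * R.refl α := by
  lift α to R.Phi using hα
  lift β to R.Phi using hβ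
  rw [← coe_reflectionPerm, refl_eq_reflection, refl_eq_reflection, refl_eq_reflection,
    RootPairing.reflection_reflectionPerm]

theorem mul_refl_mul_inv (hg : g ∈ weylGroup R) (hβ : β ∈ R.Phi) :
    g * R.refl β * g⁻¹ = R.refl (g β) := by
  change g ∈ WsubJ R R.Phi at hg
  induction hg using WsubJ_induction subset_rfl with
  | one => simp
  | refl_mul α hα g hg ih =>
    rw [LinearEquiv.mul_apply, refl_refl_apply hα (apply_mem_Phi hg hβ), ← ih, mul_inv_rev,
      refl_inv hα]
    simp only [mul_assoc]

theorem refl_neg (hβ : β ∈ R.Phi) : R.refl (-β) = R.refl β := by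
  rw [← refl_self hβ, refl_refl_apply hβ hβ, refl_mul_self hβ, one_mul]

end RootSystemData

end RootSystem

section Base

variable {V : Type} [AddCommGroup V] [Module ℝ V] {R : RootSystemData V} {Pos Δ K : Set V}
  {x β : V} {g u : V ≃ₗ[ℝ] V}

open RootSystemData

namespace IsBase

theorem delta_sub_Phi (hB : IsBase R Pos Δ) : Δ ⊆ R.Phi :=
  hB.delta_sub.trans hB.pos_sub

theorem notMem_Pos_iff (hB : IsBase R Pos Δ) (hβ : β ∈ R.Phi) : β ∉ Pos ↔ -β ∈ Pos :=
  ⟨(hB.mem_or_neg β hβ).resolve_left, fun hn hp => hB.not_both β ⟨hp, hn⟩⟩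

theorem mem_closure_delta (hB : IsBase R Pos Δ) (hβ : β ∈ Pos) : β ∈ AddSubmonoid.closure Δ := by
  obtain ⟨c, hc, rfl⟩ := hB.decomp β hβ
  refine sum_mem fun a ha => ?_
  simpa only [Nat.cast_smul_eq_nsmul] using nsmul_mem (AddSubmonoid.subset_closure (hc ha)) _

theorem image_root_preimage (hB : IsBase R Pos Δ) :
    R.toRootPairing.root '' (Subtype.val ⁻¹' Δ) = Δ := by
  rw [show ⇑R.toRootPairing.root = Subtype.val from rfl, Subtype.image_preimage_coe,
    Set.inter_eq_right]
  exact hB.delta_sub_Phi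

/-- The base of the associated Mathlib root pairing formed by the simple roots. -/
noncomputable def toBase (hB : IsBase R Pos Δ) : R.toRootPairing.Base :=
  RootPairing.Base.mk' R.toRootPairing (Subtype.val ⁻¹' Δ)
    (by
      rw [linearIndepOn_iff_image R.toRootPairing.root.injective.injOn, hB.image_root_preimage]
      exact hB.indep)
    (fun β => by
      rw [hB.image_root_preimage]
      exact (hB.mem_or_neg β β.2).imp hB.mem_closure_delta hB.mem_closure_delta)

theorem mem_support_toBase {hB : IsBase R Pos Δ} {α : R.Phi} :
    α ∈ hB.toBase.support ↔ (α : V) ∈ Δ := by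
  simp [toBase, RootPairing.Base.mk']

theorem weylGroup_eq (hB : IsBase R Pos Δ) : weylGroup R = WsubJ R Δ := by
  refine le_antisymm ((Subgroup.closure_le _).2 ?_) (WsubJ_le_weylGroup hB.delta_sub_Phi)
  rintro _ ⟨α, hα, rfl⟩
  change R.refl α ∈ WsubJ R Δ
  lift α to R.Phi using hα
  induction α using hB.toBase.induction_reflect with
  | h₀ α ih => simpa only [coe_reflectionPerm, refl_self α.2, refl_neg α.2] using ih
  | h₁ α hα => exact refl_mem_WsubJ (mem_support_toBase.1 hα)
  | h₂ α β ih hβ =>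
    have hβ := refl_mem_WsubJ (R := R) (mem_support_toBase.1 hβ)
    rw [coe_reflectionPerm, refl_refl_apply β.2 α.2]
    exact mul_mem (mul_mem hβ ih) hβ

theorem span_delta (hB : IsBase R Pos Δ) : Submodule.span ℝ Δ = ⊤ := by
  have hle : AddSubmonoid.closure Δ ≤ (Submodule.span ℝ Δ).toAddSubmonoid :=
    AddSubmonoid.closure_le.2 Submodule.subset_span
  rw [eq_top_iff, ← R.span_top, Submodule.span_le]
  intro β hβ
  rcases hB.mem_or_neg β hβ with h | h
  · exact hle (hB.mem_closure_delta h)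
  · exact (Submodule.neg_mem_iff _).1 (hle (hB.mem_closure_delta h))

/-- The simple roots as a basis of `V`. -/
noncomputable def simpleBasis (hB : IsBase R Pos Δ) : Module.Basis Δ ℝ V :=
  Module.Basis.mk hB.indep (by simp [hB.span_delta])

theorem simpleBasis_apply (hB : IsBase R Pos Δ) (a : Δ) : hB.simpleBasis a = a :=
  Module.Basis.mk_apply _ _ a

/-- The sum of the coordinates of a vector at the simple roots outside `K`; for `K = ∅` this is the
height. -/
noncomputable def heightOff (hB : IsBase R Pos Δ) (K : Set V) : V →ₗ[ℝ] ℝ :=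
  hB.simpleBasis.constr ℝ fun a => if (a : V) ∈ K then 0 else 1

theorem heightOff_of_mem_delta (hB : IsBase R Pos Δ) {a : V} (ha : a ∈ Δ) :
    hB.heightOff K a = if a ∈ K then 0 else 1 := by
  lift a to Δ using ha
  conv_lhs => rw [← hB.simpleBasis_apply a]
  exact hB.simpleBasis.constr_basis ℝ _ a

theorem heightOff_of_mem (hB : IsBase R Pos Δ) (hK : K ⊆ Δ) {a : V} (ha : a ∈ K) :
    hB.heightOff K a = 0 := by
  rw [hB.heightOff_of_mem_delta (hK ha), if_pos ha]

theorem heightOff_nonneg (hB : IsBase R Pos Δ) (K : Set V) (hx : x ∈ AddSubmonoid.closure Δ) :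
    0 ≤ hB.heightOff K x := by
  induction hx using AddSubmonoid.closure_induction with
  | mem a ha => rw [hB.heightOff_of_mem_delta ha]; split_ifs <;> simp
  | zero => simp
  | add x y _ _ ihx ihy => rw [map_add]; exact add_nonneg ihx ihy

theorem mem_closure_of_heightOff_eq_zero (hB : IsBase R Pos Δ) (hx : x ∈ AddSubmonoid.closure Δ)
    (h : hB.heightOff K x = 0) : x ∈ AddSubmonoid.closure K := by
  induction hx using AddSubmonoid.closure_induction with
  | mem a ha =>
    rw [hB.heightOff_of_mem_delta ha] at h
    exact AddSubmonoid.subset_closure (by simpa using h)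
  | zero => exact zero_mem _
  | add x y hx hy ihx ihy =>
    rw [map_add, add_eq_zero_iff_of_nonneg (hB.heightOff_nonneg K hx) (hB.heightOff_nonneg K hy)]
      at h
    exact add_mem (ihx h.1) (ihy h.2)

theorem eq_zero_of_height_eq_zero (hB : IsBase R Pos Δ) (hx : x ∈ AddSubmonoid.closure Δ)
    (h : hB.heightOff ∅ x = 0) : x = 0 := by
  simpa using hB.mem_closure_of_heightOff_eq_zero hx h

theorem mem_Pos_of_heightOff_pos (hB : IsBase R Pos Δ) (hβ : β ∈ R.Phi)
    (h : 0 < hB.heightOff K β) : β ∈ Pos := by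
  by_contra hn
  have := hB.heightOff_nonneg K (hB.mem_closure_delta ((hB.notMem_Pos_iff hβ).1 hn))
  rw [map_neg] at this
  linarith

theorem mem_Pos_of_mem_closure (hB : IsBase R Pos Δ) (hβ : β ∈ R.Phi)
    (h : β ∈ AddSubmonoid.closure Δ) : β ∈ Pos := by
  have hβ0 : β ≠ 0 := fun h0 => R.zero_not_mem (h0 ▸ hβ)
  exact hB.mem_Pos_of_heightOff_pos hβ <|
    (hB.heightOff_nonneg ∅ h).lt_of_ne fun h0 => hβ0 (hB.eq_zero_of_height_eq_zero h h0.symm)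

theorem apply_mem_Phi_of_mem_delta (hB : IsBase R Pos Δ) (hg : g ∈ weylGroup R) {a : V}
    (ha : a ∈ Δ) : g a ∈ R.Phi :=
  apply_mem_Phi hg (hB.delta_sub_Phi ha)

theorem map_mem_Pos (hB : IsBase R Pos Δ) (f : V →+ V) (hf : ∀ a ∈ K, f a ∈ Pos)
    (hβ : f β ∈ R.Phi) (hβK : β ∈ AddSubmonoid.closure K) : f β ∈ Pos := by
  have : AddSubmonoid.closure K ≤ (AddSubmonoid.closure Δ).comap f :=
    AddSubmonoid.closure_le.2 fun a ha => hB.mem_closure_delta (hf a ha)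
  exact hB.mem_Pos_of_mem_closure hβ (this hβK)

theorem apply_notMem_Pos (hB : IsBase R Pos Δ) (hK : K ⊆ Δ) (hg : g ∈ weylGroup R)
    (hgK : ∀ a ∈ K, g a ∉ Pos) (hβ : β ∈ R.Phi) (hβK : β ∈ AddSubmonoid.closure K) :
    g β ∉ Pos := by
  rw [hB.notMem_Pos_iff (apply_mem_Phi hg hβ)]
  exact hB.map_mem_Pos (-(g : V →+ V))
    (fun a ha => (hB.notMem_Pos_iff (hB.apply_mem_Phi_of_mem_delta hg (hK ha))).1 (hgK a ha))
    (neg_mem_Phi (apply_mem_Phi hg hβ)) hβK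

theorem heightOff_apply (hB : IsBase R Pos Δ) (hK : K ⊆ Δ) (hu : u ∈ WsubJ R K) (x : V) :
    hB.heightOff K (u x) = hB.heightOff K x := by
  induction hu using WsubJ_induction (hK.trans hB.delta_sub_Phi) with
  | one => rfl
  | refl_mul α hα u hu ih =>
    rw [LinearEquiv.mul_apply, refl_apply (hB.delta_sub_Phi (hK hα)), map_sub, map_smul,
      hB.heightOff_of_mem hK hα, smul_zero, sub_zero, ih]

theorem apply_mem_Pos_of_heightOff_ne_zero (hB : IsBase R Pos Δ) (hK : K ⊆ Δ)
    (hu : u ∈ WsubJ R K) (hβ : β ∈ Pos) (h : hB.heightOff K β ≠ 0) : u β ∈ Pos := by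
  have huW := WsubJ_le_weylGroup (hK.trans hB.delta_sub_Phi) hu
  refine hB.mem_Pos_of_heightOff_pos (K := K) (apply_mem_Phi huW (hB.pos_sub hβ)) ?_
  rw [hB.heightOff_apply hK hu]
  exact (hB.heightOff_nonneg K (hB.mem_closure_delta hβ)).lt_of_ne' h

theorem refl_apply_mem_Pos (hB : IsBase R Pos Δ) {a : V} (ha : a ∈ Δ) (hβ : β ∈ Pos)
    (hne : β ≠ a) : R.refl a β ∈ Pos := by
  refine hB.apply_mem_Pos_of_heightOff_ne_zero (Set.singleton_subset_iff.2 ha)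
    (refl_mem_WsubJ rfl) hβ fun h => ?_
  obtain ⟨n, rfl⟩ := AddSubmonoid.mem_closure_singleton.1
    (hB.mem_closure_of_heightOff_eq_zero (hB.mem_closure_delta hβ) h)
  rw [← Nat.cast_smul_eq_nsmul ℝ] at hβ hne
  rcases R.reduced a (hB.delta_sub_Phi ha) n (hB.pos_sub hβ) with hn | hn
  · simp [hn] at hne
  · have : (0 : ℝ) ≤ n := n.cast_nonneg
    linarith

end IsBase

end Base

section Inversion

variable {V : Type} [AddCommGroup V] [Module ℝ V] {R : RootSystemData V} {Pos Δ K : Set V}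
  {x a β : V} {g u : V ≃ₗ[ℝ] V}

open RootSystemData

namespace IsBase

theorem exists_eq_add_of_mem_Pos (hB : IsBase R Pos Δ) (hβ : β ∈ Pos) :
    ∃ a ∈ Δ, ∃ y ∈ AddSubmonoid.closure Δ, β = a + y := by
  have hβ0 : β ≠ 0 := fun h0 => R.zero_not_mem (h0 ▸ hB.pos_sub hβ)
  have hclosure := hB.mem_closure_delta hβ
  induction hclosure using AddSubmonoid.closure_induction_left with
  | zero => exact absurd rfl hβ0
  | add_left a ha y hy _ => exact ⟨a, ha, y, hy, rfl⟩

theorem one_le_height (hB : IsBase R Pos Δ) (hβ : β ∈ Pos) : 1 ≤ hB.heightOff ∅ β := by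
  obtain ⟨a, ha, y, hy, rfl⟩ := hB.exists_eq_add_of_mem_Pos hβ
  simpa [hB.heightOff_of_mem_delta ha] using hB.heightOff_nonneg ∅ hy

theorem mem_delta_of_height_le_one (hB : IsBase R Pos Δ) (hβ : β ∈ Pos)
    (h : hB.heightOff ∅ β ≤ 1) : β ∈ Δ := by
  obtain ⟨a, ha, y, hy, rfl⟩ := hB.exists_eq_add_of_mem_Pos hβ
  have hy0 : hB.heightOff ∅ y ≤ 0 := by simpa [hB.heightOff_of_mem_delta ha] using h
  rwa [hB.eq_zero_of_height_eq_zero hy (hy0.antisymm (hB.heightOff_nonneg ∅ hy)), add_zero]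

theorem height_le_height_map (hB : IsBase R Pos Δ) (f : V →+ V) (hf : ∀ a ∈ Δ, f a ∈ Pos)
    (hx : x ∈ AddSubmonoid.closure Δ) : hB.heightOff ∅ x ≤ hB.heightOff ∅ (f x) := by
  induction hx using AddSubmonoid.closure_induction with
  | mem a ha => simpa [hB.heightOff_of_mem_delta ha] using hB.one_le_height (hf a ha)
  | zero => simp
  | add x y _ _ ihx ihy => simpa only [map_add] using add_le_add ihx ihy

theorem inv_apply_notMem_Pos (hB : IsBase R Pos Δ) (hK : K ⊆ Δ) (hu : u ∈ WsubJ R K)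
    (huK : ∀ a ∈ K, u a ∉ Pos) (ha : a ∈ K) : u⁻¹ a ∉ Pos := by
  intro hpos
  have huW := WsubJ_le_weylGroup (hK.trans hB.delta_sub_Phi) hu
  have hclosure : u⁻¹ a ∈ AddSubmonoid.closure K :=
    hB.mem_closure_of_heightOff_eq_zero (hB.mem_closure_delta hpos) <| by
      rw [hB.heightOff_apply hK (inv_mem hu), hB.heightOff_of_mem hK ha]
  have := hB.apply_notMem_Pos hK huW huK (hB.pos_sub hpos) hclosure
  exact this (by simpa using hB.delta_sub (hK ha))

theorem neg_apply_mem_delta (hB : IsBase R Pos Δ) (hg : g ∈ weylGroup R)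
    (hgΔ : ∀ a ∈ Δ, g a ∉ Pos) (ha : a ∈ Δ) : -g a ∈ Δ := by
  have hneg {g : V ≃ₗ[ℝ] V} (hg : g ∈ weylGroup R) (hgΔ : ∀ a ∈ Δ, g a ∉ Pos) :
      ∀ a ∈ Δ, -g a ∈ Pos :=
    fun a ha => (hB.notMem_Pos_iff (hB.apply_mem_Phi_of_mem_delta hg ha)).1 (hgΔ a ha)
  refine hB.mem_delta_of_height_le_one (hneg hg hgΔ a ha) ?_
  have hinv : ∀ a ∈ Δ, g⁻¹ a ∉ Pos := fun a =>
    hB.inv_apply_notMem_Pos subset_rfl (hB.weylGroup_eq ▸ hg) hgΔ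
  have := hB.height_le_height_map (-((g⁻¹ : V ≃ₗ[ℝ] V) : V →+ V)) (hneg (inv_mem hg) hinv)
    (hB.mem_closure_delta (hneg hg hgΔ a ha))
  simpa [hB.heightOff_of_mem_delta ha] using this

end IsBase

end Inversion

section Length

section Group

variable {G : Type*} [Group G] {S : Set G}

theorem lengthWrt_prod_le {l : List G} (hl : ∀ x ∈ l, x ∈ S) : lengthWrt S l.prod ≤ l.length :=
  Nat.sInf_le ⟨l, rfl, hl, rfl⟩

theorem exists_list_length_eq_lengthWrt (hS : S⁻¹ ⊆ S) {w : G} (hw : w ∈ Subgroup.closure S) :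
    ∃ l : List G, l.length = lengthWrt S w ∧ (∀ x ∈ l, x ∈ S) ∧ l.prod = w := by
  rw [← Subgroup.mem_toSubmonoid, Subgroup.closure_toSubmonoid, Set.union_eq_left.2 hS] at hw
  obtain ⟨l, hl, hprod⟩ := Submonoid.exists_list_of_mem_closure hw
  exact Nat.sInf_mem (s := {n | ∃ l : List G, l.length = n ∧ (∀ x ∈ l, x ∈ S) ∧ l.prod = w})
    ⟨_, l, rfl, hl, hprod⟩

end Group

variable {V : Type} [AddCommGroup V] [Module ℝ V] {R : RootSystemData V} {Pos Δ K : Set V}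
  {a : V} {w g : V ≃ₗ[ℝ] V}

open RootSystemData

namespace IsBase

theorem inv_refls_sub (hB : IsBase R Pos Δ) : (refls R Δ)⁻¹ ⊆ refls R Δ := by
  rintro x ⟨a, ha, hx⟩
  exact ⟨a, ha, by rw [← inv_inv x, hx, refl_inv (hB.delta_sub_Phi ha)]⟩

theorem exists_list_length_eq_len (hB : IsBase R Pos Δ) (hw : w ∈ weylGroup R) :
    ∃ l : List (V ≃ₗ[ℝ] V), l.length = len R Δ w ∧ (∀ x ∈ l, x ∈ refls R Δ) ∧ l.prod = w :=
  exists_list_length_eq_lengthWrt hB.inv_refls_sub (hB.weylGroup_eq.le hw)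

theorem exchange (hB : IsBase R Pos Δ) (ha : a ∈ Δ) {l : List (V ≃ₗ[ℝ] V)}
    (hl : ∀ x ∈ l, x ∈ refls R Δ) (h : l.prod⁻¹ a ∉ Pos) :
    ∃ l' : List (V ≃ₗ[ℝ] V), l'.length + 1 = l.length ∧ (∀ x ∈ l', x ∈ refls R Δ) ∧
      l'.prod = R.refl a * l.prod := by
  induction l using List.reverseRecOn with
  | nil => exact absurd (hB.delta_sub ha) (by simpa using h)
  | append_singleton l s ih =>
    have hl' : ∀ x ∈ l, x ∈ refls R Δ := fun x hx => hl x (by simp [hx])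
    obtain ⟨b, hb, rfl⟩ : s ∈ refls R Δ := hl s (by simp)
    have hbPhi := hB.delta_sub_Phi hb
    rw [List.prod_append, List.prod_singleton] at h ⊢
    by_cases hpos : l.prod⁻¹ a ∈ Pos
    · have hab : l.prod⁻¹ a = b := by
        by_contra hne
        refine h ?_
        rw [mul_inv_rev, refl_inv hbPhi]
        exact hB.refl_apply_mem_Pos hb hpos hne
      have hlW : l.prod ∈ weylGroup R :=
        hB.weylGroup_eq ▸ list_prod_mem fun x hx => Subgroup.subset_closure (hl' x hx)
      have hconj : l.prod * R.refl b * l.prod⁻¹ = R.refl a := by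
        rw [mul_refl_mul_inv hlW hbPhi, ← hab]
        simp
      refine ⟨l, by simp, hl', ?_⟩
      rw [← hconj, mul_assoc, inv_mul_cancel_left, mul_assoc, refl_mul_self hbPhi, mul_one]
    · obtain ⟨l', hlen, hl'S, hprod⟩ := ih hl' hpos
      refine ⟨l' ++ [R.refl b], by simp [← hlen], ?_, by simp [hprod, mul_assoc]⟩
      simpa [or_imp, forall_and] using ⟨hl'S, b, hb, rfl⟩

theorem len_refl_mul_lt (hB : IsBase R Pos Δ) (hw : w ∈ weylGroup R) (ha : a ∈ Δ)
    (h : w⁻¹ a ∉ Pos) : len R Δ (R.refl a * w) < len R Δ w := by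
  obtain ⟨l, hlen, hl, rfl⟩ := hB.exists_list_length_eq_len hw
  obtain ⟨l', hlen', hl', hprod⟩ := hB.exchange ha hl h
  have : len R Δ (R.refl a * l.prod) ≤ l'.length := hprod ▸ lengthWrt_prod_le hl'
  lia

theorem len_lt_refl_mul (hB : IsBase R Pos Δ) (hw : w ∈ weylGroup R) (ha : a ∈ Δ)
    (h : w⁻¹ a ∈ Pos) : len R Δ w < len R Δ (R.refl a * w) := by
  have haPhi := hB.delta_sub_Phi ha
  have hinv : (R.refl a * w)⁻¹ a = -w⁻¹ a := by
    rw [mul_inv_rev, refl_inv haPhi, LinearEquiv.mul_apply, refl_self haPhi, map_neg]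
  have := hB.len_refl_mul_lt (mul_mem (refl_mem_weylGroup haPhi) hw) ha
    (hinv ▸ fun hneg => hB.not_both _ ⟨h, hneg⟩)
  rwa [← mul_assoc, refl_mul_self haPhi, one_mul] at this

theorem eq_one_of_forall_apply_mem_Pos (hB : IsBase R Pos Δ) (hw : w ∈ weylGroup R)
    (h : ∀ a ∈ Δ, w a ∈ Pos) : w = 1 := by
  obtain ⟨l, hlen, hl, hprod⟩ := hB.exists_list_length_eq_len (inv_mem hw)
  cases l with
  | nil => simpa using hprod.symm
  | cons s l =>
    obtain ⟨⟨a, ha, rfl⟩, hl'⟩ := List.forall_mem_cons.1 hl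
    have hgt := hB.len_lt_refl_mul (inv_mem hw) ha (by simpa using h a ha)
    have hle : len R Δ l.prod ≤ l.length := lengthWrt_prod_le hl'
    rw [← hlen, ← hprod, List.prod_cons, ← mul_assoc, refl_mul_self (hB.delta_sub_Phi ha),
      one_mul, List.length_cons] at hgt
    lia

theorem inv_apply_notMem_Pos_of_isLongestIn (hB : IsBase R Pos Δ) (hK : K ⊆ Δ)
    (hg : IsLongestIn R Δ (WsubJ R K) g) (ha : a ∈ K) : g⁻¹ a ∉ Pos := fun h =>
  (hB.len_lt_refl_mul (WsubJ_le_weylGroup (hK.trans hB.delta_sub_Phi) hg.1) (hK ha) h).not_ge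
    (hg.2 _ (mul_mem (refl_mem_WsubJ ha) hg.1))

theorem apply_notMem_Pos_of_isLongestIn (hB : IsBase R Pos Δ) (hK : K ⊆ Δ)
    (hg : IsLongestIn R Δ (WsubJ R K) g) (ha : a ∈ K) : g a ∉ Pos := by
  simpa only [inv_inv] using hB.inv_apply_notMem_Pos hK (inv_mem hg.1)
    (fun _ => hB.inv_apply_notMem_Pos_of_isLongestIn hK hg) ha

end IsBase

end Length

section Chain

variable {G : Type*} [Group G] {S : Set G} {ℓ : G → ℕ} {pJ : G → G} {s w w' : G}

theorem chainProd_zero (σ : ℕ → G) : chainProd σ 0 = 1 := by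
  simp [chainProd]

theorem chainProd_succ (σ : ℕ → G) (i : ℕ) :
    chainProd σ (i + 1) = σ (i + 1) * chainProd σ i := by
  simp [chainProd, List.range'_concat, add_comm]

/-- The sequence `s, σ 1, σ 2, …`, indexed from `1` like the sequences in `chainProd`. -/
def consSeq (s : G) (σ : ℕ → G) (m : ℕ) : G :=
  if m = 1 then s else σ (m - 1)

theorem chainProd_consSeq (σ : ℕ → G) (i : ℕ) :
    chainProd (consSeq s σ) (i + 1) = chainProd σ i * s := by
  induction i with
  | zero => simp [chainProd_succ, chainProd_zero, consSeq]
  | succ i ih => rw [chainProd_succ, ih, chainProd_succ]; simp [consSeq, mul_assoc]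

theorem chainElt_consSeq (σ : ℕ → G) (hp : pJ (s * w) = s * w) (i : ℕ) :
    chainElt pJ (consSeq s σ) w (i + 1) = chainElt pJ σ (s * w) i := by
  cases i <;> simp [chainElt, chainProd_consSeq, chainProd_zero, hp, mul_assoc]

theorem ltJ_mul_left (hs : s ∈ S) (hp : pJ (s * w) = s * w) (hℓ : ℓ w < ℓ (s * w)) :
    ltJ S ℓ pJ w (s * w) := by
  refine ⟨1, le_rfl, fun _ => s, fun _ _ _ => hs, fun m h₁ h₂ => ?_, ?_⟩
  · obtain rfl := le_antisymm h₂ h₁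
    simpa [chainElt, chainProd_succ, chainProd_zero, hp] using hℓ
  · simpa [chainElt, chainProd_succ, chainProd_zero] using hp

theorem ltJ_of_ltJ_mul_left (hs : s ∈ S) (hp : pJ (s * w) = s * w) (hℓ : ℓ w < ℓ (s * w))
    (h : ltJ S ℓ pJ (s * w) w') : ltJ S ℓ pJ w w' := by
  obtain ⟨r, -, σ, hσ, hlt, rfl⟩ := h
  refine ⟨r + 1, by lia, consSeq s σ, fun m h₁ hm => ?_, fun m h₁ hm => ?_,
    chainElt_consSeq σ hp r⟩
  · by_cases h : m = 1
    · simpa [consSeq, h] using hs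
    · simpa [consSeq, h] using hσ (m - 1) (by lia) (by lia)
  · obtain ⟨i, rfl⟩ := Nat.exists_eq_add_of_le' h₁
    rw [Nat.add_sub_cancel, chainElt_consSeq σ hp]
    rcases i with - | i
    · simpa [chainElt] using hℓ
    · rw [chainElt_consSeq σ hp]
      exact hlt (i + 1) (by lia) (by lia)

end Chain

theorem exists_reflTransGen_forall_not {α : Type*} {r : α → α → Prop} {f : α → ℕ} {x : α} {N : ℕ}
    (hlt : ∀ y z, Relation.ReflTransGen r x y → r y z → f y < f z)
    (hle : ∀ y, Relation.ReflTransGen r x y → f y ≤ N) :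
    ∃ y, Relation.ReflTransGen r x y ∧ ∀ z, ¬ r y z := by
  have hbdd : BddAbove (f '' {y | Relation.ReflTransGen r x y}) :=
    ⟨N, Set.forall_mem_image.2 hle⟩
  obtain ⟨y, hy, hmax⟩ := Nat.sSup_mem ⟨_, Set.mem_image_of_mem f .refl⟩ hbdd
  refine ⟨y, hy, fun z hz => (hlt y z hy hz).not_ge ?_⟩
  rw [hmax]
  exact le_csSup hbdd (Set.mem_image_of_mem f (.tail hy hz))

section MinimalRepresentatives

variable {V : Type} [AddCommGroup V] [Module ℝ V] {R : RootSystemData V} {Pos Δ J : Set V}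
  {a β : V} {w x y : V ≃ₗ[ℝ] V} {pJ : (V ≃ₗ[ℝ] V) → (V ≃ₗ[ℝ] V)}

open RootSystemData

theorem mem_VupJ_iff :
    w ∈ VupJ R Pos Δ J ↔ w ∈ WupJ R Pos J ∧ ∀ α ∈ Δ, α ∉ J → w α ∉ Pos := by
  refine and_congr_right fun hw => forall₃_congr fun α _ _ => not_congr ?_
  simpa [WupJ, or_imp, forall_and, hw.1] using fun _ => hw.2

namespace IsBase

theorem apply_mem_Pos_of_heightOff_eq_zero (hB : IsBase R Pos Δ) (hx : x ∈ WupJ R Pos J)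
    (hβ : β ∈ Pos) (h : hB.heightOff J β = 0) : x β ∈ Pos :=
  hB.map_mem_Pos (x : V →+ V) hx.2 (apply_mem_Phi hx.1 (hB.pos_sub hβ))
    (hB.mem_closure_of_heightOff_eq_zero (hB.mem_closure_delta hβ) h)

theorem eq_of_inv_mul_mem_WsubJ (hB : IsBase R Pos Δ) (hJ : J ⊆ Δ) (hx : x ∈ WupJ R Pos J)
    (hy : y ∈ WupJ R Pos J) (h : x⁻¹ * y ∈ WsubJ R J) : x = y := by
  have hW : x⁻¹ * y ∈ weylGroup R := mul_mem (inv_mem hx.1) hy.1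
  refine inv_mul_eq_one.1 (hB.eq_one_of_forall_apply_mem_Pos hW fun a ha => ?_)
  by_cases haJ : a ∈ J
  · have hPhi := hB.apply_mem_Phi_of_mem_delta hW ha
    by_contra hnot
    have hneg := (hB.notMem_Pos_iff hPhi).1 hnot
    have hxneg : x (-(x⁻¹ * y) a) ∈ Pos := hB.apply_mem_Pos_of_heightOff_eq_zero hx hneg <| by
      rw [map_neg, hB.heightOff_apply hJ h, hB.heightOff_of_mem hJ haJ, neg_zero]
    exact hB.not_both (y a) ⟨hy.2 a haJ, by simpa using hxneg⟩
  · refine hB.apply_mem_Pos_of_heightOff_ne_zero hJ h (hB.delta_sub ha) ?_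
    simp [hB.heightOff_of_mem_delta ha, haJ]

theorem pJ_eq_self (hB : IsBase R Pos Δ) (hJ : J ⊆ Δ) (hpJ : IsProjJ R Pos J pJ)
    (hx : x ∈ WupJ R Pos J) : pJ x = x :=
  hB.eq_of_inv_mul_mem_WsubJ hJ (hpJ x hx.1).1 hx (hpJ x hx.1).2

theorem refl_mul_mem_WupJ (hB : IsBase R Pos Δ) (hw : w ∈ WupJ R Pos J) (ha : a ∈ Δ)
    (h : w⁻¹ a ∉ J) : R.refl a * w ∈ WupJ R Pos J := by
  refine ⟨mul_mem (refl_mem_weylGroup (hB.delta_sub_Phi ha)) hw.1, fun α hα => ?_⟩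
  refine hB.refl_apply_mem_Pos ha (hw.2 α hα) fun hwα => h ?_
  simpa [← hwα] using hα

theorem refl_mul_mem_VupJ (hB : IsBase R Pos Δ) (hw : w ∈ VupJ R Pos Δ J) (ha : a ∈ Δ)
    (hpos : w⁻¹ a ∈ Pos) (h : w⁻¹ a ∉ J) : R.refl a * w ∈ VupJ R Pos Δ J := by
  rw [mem_VupJ_iff] at hw ⊢
  refine ⟨hB.refl_mul_mem_WupJ hw.1 ha h, fun α hα hαJ hcon => ?_⟩
  have hneg : -w α ∈ Pos :=
    (hB.notMem_Pos_iff (hB.apply_mem_Phi_of_mem_delta hw.1.1 hα)).1 (hw.2 α hα hαJ)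
  by_cases haα : -w α = a
  · exact hB.not_both α ⟨hB.delta_sub hα, by simpa [← haα] using hpos⟩
  · exact hB.not_both _ ⟨hcon, by simpa using hB.refl_apply_mem_Pos ha hneg haα⟩

theorem len_pJ_refl_mul_lt (hB : IsBase R Pos Δ) (hJ : J ⊆ Δ) (hpJ : IsProjJ R Pos J pJ)
    (hw : w ∈ WupJ R Pos J) (ha : a ∈ Δ) (h : w⁻¹ a ∉ Pos) :
    len R Δ (pJ (R.refl a * w)) < len R Δ w := by
  have hmem := hB.refl_mul_mem_WupJ hw ha fun haJ => h (hB.delta_sub (hJ haJ))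
  rw [hB.pJ_eq_self hJ hpJ hmem]
  exact hB.len_refl_mul_lt hw.1 ha h

theorem pJ_refl_mul_eq_self (hB : IsBase R Pos Δ) (hJ : J ⊆ Δ) (hpJ : IsProjJ R Pos J pJ)
    (hw : w ∈ WupJ R Pos J) (h : w⁻¹ a ∈ J) : pJ (R.refl a * w) = w := by
  have hcomm : R.refl a * w = w * R.refl (w⁻¹ a) := by
    rw [eq_comm, ← mul_inv_eq_iff_eq_mul, mul_refl_mul_inv hw.1 (hB.delta_sub_Phi (hJ h))]
    simp
  have hr : R.refl (w⁻¹ a) ∈ WsubJ R J := refl_mem_WsubJ h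
  have hrW := WsubJ_le_weylGroup (hJ.trans hB.delta_sub_Phi) hr
  obtain ⟨hmem, hcoset⟩ := hpJ (w * R.refl (w⁻¹ a)) (mul_mem hw.1 hrW)
  rw [← mul_assoc, Subgroup.mul_mem_cancel_right _ hr] at hcoset
  rw [hcomm]
  exact hB.eq_of_inv_mul_mem_WsubJ hJ hmem hw hcoset

theorem le_len_pJ_refl_mul (hB : IsBase R Pos Δ) (hJ : J ⊆ Δ) (hpJ : IsProjJ R Pos J pJ)
    (hw : w ∈ WupJ R Pos J) (ha : a ∈ Δ) (h : w⁻¹ a ∈ Pos) :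
    len R Δ w ≤ len R Δ (pJ (R.refl a * w)) := by
  by_cases haJ : w⁻¹ a ∈ J
  · rw [hB.pJ_refl_mul_eq_self hJ hpJ hw haJ]
  · rw [hB.pJ_eq_self hJ hpJ (hB.refl_mul_mem_WupJ hw ha haJ)]
    exact (hB.len_lt_refl_mul hw.1 ha h).le

end IsBase

end MinimalRepresentatives

section Ascent

variable {V : Type} [AddCommGroup V] [Module ℝ V] {R : RootSystemData V} {Pos Δ J E : Set V}
  {w x y wD : V ≃ₗ[ℝ] V} {pJ : (V ≃ₗ[ℝ] V) → (V ≃ₗ[ℝ] V)}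

open RootSystemData Relation

/-- The relation between `x` and `y = s_a x`, for `a ∈ E`, that holds when left multiplication by
`s_a` increases the length of `x` and does not fix the coset `x W_J`. -/
def AscentStep (R : RootSystemData V) (Pos J E : Set V) (x y : V ≃ₗ[ℝ] V) : Prop :=
  ∃ a ∈ E, x⁻¹ a ∈ Pos ∧ x⁻¹ a ∉ J ∧ y = R.refl a * x

theorem mul_inv_mem_WsubJ_of_reflTransGen (h : ReflTransGen (AscentStep R Pos J E) x y) :
    y * x⁻¹ ∈ WsubJ R E := by
  induction h with
  | refl => simp [one_mem]
  | tail _ hstep ih =>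
    obtain ⟨a, ha, -, -, rfl⟩ := hstep
    rw [mul_assoc]
    exact mul_mem (refl_mem_WsubJ ha) ih

namespace IsBase

theorem mem_VupJ_of_ascentStep (hB : IsBase R Pos Δ) (hE : E ⊆ Δ) (hx : x ∈ VupJ R Pos Δ J)
    (h : AscentStep R Pos J E x y) : y ∈ VupJ R Pos Δ J := by
  obtain ⟨a, ha, hpos, haJ, rfl⟩ := h
  exact hB.refl_mul_mem_VupJ hx (hE ha) hpos haJ

theorem mem_VupJ_of_reflTransGen (hB : IsBase R Pos Δ) (hE : E ⊆ Δ) (hx : x ∈ VupJ R Pos Δ J)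
    (h : ReflTransGen (AscentStep R Pos J E) x y) : y ∈ VupJ R Pos Δ J := by
  induction h with
  | refl => exact hx
  | tail _ hstep ih => exact hB.mem_VupJ_of_ascentStep hE ih hstep

theorem len_lt_of_ascentStep (hB : IsBase R Pos Δ) (hE : E ⊆ Δ) (hx : x ∈ weylGroup R)
    (h : AscentStep R Pos J E x y) : len R Δ x < len R Δ y := by
  obtain ⟨a, ha, hpos, -, rfl⟩ := h
  exact hB.len_lt_refl_mul hx (hE ha) hpos

theorem ltJ_of_transGen (hB : IsBase R Pos Δ) (hJ : J ⊆ Δ) (hpJ : IsProjJ R Pos J pJ) (hE : E ⊆ Δ)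
    (hx : x ∈ VupJ R Pos Δ J) (h : TransGen (AscentStep R Pos J E) x y) :
    ltJ (refls R Δ) (len R Δ) pJ x y := by
  induction h using TransGen.head_induction_on with
  | @single x hstep =>
    have hp := hB.pJ_eq_self hJ hpJ (hB.mem_VupJ_of_ascentStep hE hx hstep).1
    have hℓ := hB.len_lt_of_ascentStep hE hx.1.1 hstep
    obtain ⟨a, ha, -, -, rfl⟩ := hstep
    exact ltJ_mul_left ⟨a, hE ha, rfl⟩ hp hℓ
  | @head x _ hstep _ ih =>
    have hmem := hB.mem_VupJ_of_ascentStep hE hx hstep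
    have hp := hB.pJ_eq_self hJ hpJ hmem.1
    have hℓ := hB.len_lt_of_ascentStep hE hx.1.1 hstep
    obtain ⟨a, ha, -, -, rfl⟩ := hstep
    exact ltJ_of_ltJ_mul_left ⟨a, hE ha, rfl⟩ hp hℓ (ih hmem)

theorem exists_maximal_ascent (hB : IsBase R Pos Δ) (hE : E ⊆ Δ)
    (hwD : IsLongestIn R Δ (weylGroup R) wD) (hw : w ∈ VupJ R Pos Δ J) :
    ∃ y, ReflTransGen (AscentStep R Pos J E) w y ∧ ∀ a ∈ E, y⁻¹ a ∈ Pos → y⁻¹ a ∈ J := by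
  have hmem {y} (h : ReflTransGen (AscentStep R Pos J E) w y) : y ∈ weylGroup R :=
    (hB.mem_VupJ_of_reflTransGen hE hw h).1.1
  obtain ⟨y, hy, hmax⟩ := exists_reflTransGen_forall_not
    (fun y _ hy hz => hB.len_lt_of_ascentStep hE (hmem hy) hz) (fun y hy => hwD.2 y (hmem hy))
  exact ⟨y, hy, fun a ha hpos => by_contra fun haJ => hmax _ ⟨a, ha, hpos, haJ, rfl⟩⟩

end IsBase

end Ascent

section LongestElement

variable {V : Type} [AddCommGroup V] [Module ℝ V] {R : RootSystemData V} {Pos Δ J A B : Set V}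
  {a e : V} {u g w x wD wJ : V ≃ₗ[ℝ] V}

open RootSystemData

theorem mul_mul_inv_mem_WsubJ (hA : A ⊆ R.Phi) (hg : g ∈ weylGroup R) (h : ∀ a ∈ A, -g a ∈ B)
    (hu : u ∈ WsubJ R A) : g * u * g⁻¹ ∈ WsubJ R B := by
  induction hu using WsubJ_induction hA with
  | one => simp [one_mem]
  | refl_mul a ha u _ ih =>
    have hrefl : g * R.refl a * g⁻¹ ∈ WsubJ R B := by
      rw [mul_refl_mul_inv hg (hA ha), ← refl_neg (apply_mem_Phi hg (hA ha))]
      exact refl_mem_WsubJ (h a ha)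
    simpa [mul_assoc] using mul_mem hrefl ih

/-- The simple roots `a` such that left multiplication by `s_a` increases the length of `w`. -/
def leftAscents (Pos Δ : Set V) (w : V ≃ₗ[ℝ] V) : Set V :=
  {a ∈ Δ | w⁻¹ a ∈ Pos}

namespace IsBase

theorem apply_longest_notMem_Pos (hB : IsBase R Pos Δ) (hwD : IsLongestIn R Δ (weylGroup R) wD)
    {β : V} (hβ : β ∈ Pos) : wD β ∉ Pos := by
  have hneg : ∀ a ∈ Δ, wD a ∉ Pos := fun a =>
    hB.apply_notMem_Pos_of_isLongestIn subset_rfl (hB.weylGroup_eq ▸ hwD)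
  exact hB.apply_notMem_Pos subset_rfl hwD.1 hneg (hB.pos_sub hβ) (hB.mem_closure_delta hβ)

theorem apply_longest_mem_Pos (hB : IsBase R Pos Δ) (hwD : IsLongestIn R Δ (weylGroup R) wD)
    {β : V} (hβ : β ∈ R.Phi) (hneg : β ∉ Pos) : wD β ∈ Pos := by
  have := hB.apply_longest_notMem_Pos hwD ((hB.notMem_Pos_iff hβ).1 hneg)
  rw [map_neg, hB.notMem_Pos_iff (neg_mem_Phi (apply_mem_Phi hwD.1 hβ)), neg_neg] at this
  exact this

theorem neg_longest_apply_mem_delta (hB : IsBase R Pos Δ)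
    (hwD : IsLongestIn R Δ (weylGroup R) wD) (ha : a ∈ Δ) : -wD a ∈ Δ :=
  hB.neg_apply_mem_delta hwD.1 (fun _ hb => hB.apply_longest_notMem_Pos hwD (hB.delta_sub hb)) ha

theorem neg_longest_inv_apply_mem_delta (hB : IsBase R Pos Δ)
    (hwD : IsLongestIn R Δ (weylGroup R) wD) (ha : a ∈ Δ) : -wD⁻¹ a ∈ Δ := by
  refine hB.neg_apply_mem_delta (inv_mem hwD.1) (fun b hb => ?_) ha
  exact hB.inv_apply_notMem_Pos_of_isLongestIn subset_rfl (hB.weylGroup_eq ▸ hwD) hb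

theorem longest_mul_longest_mem_WupJ (hB : IsBase R Pos Δ) (hJ : J ⊆ Δ)
    (hwD : IsLongestIn R Δ (weylGroup R) wD) (hwJ : IsLongestIn R Δ (WsubJ R J) wJ) :
    wD * wJ ∈ WupJ R Pos J := by
  have hwJW := WsubJ_le_weylGroup (hJ.trans hB.delta_sub_Phi) hwJ.1
  exact ⟨mul_mem hwD.1 hwJW, fun α hα => hB.apply_longest_mem_Pos hwD
    (hB.apply_mem_Phi_of_mem_delta hwJW (hJ hα)) (hB.apply_notMem_Pos_of_isLongestIn hJ hwJ hα)⟩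

theorem longest_apply_inv_apply_notMem_Pos (hB : IsBase R Pos Δ) (hJ : J ⊆ Δ)
    (hwJ : IsLongestIn R Δ (WsubJ R J) wJ) (hx : x ∈ WupJ R Pos J) (ha : a ∈ Δ)
    (h : x⁻¹ a ∈ Pos → x⁻¹ a ∈ J) : wJ (x⁻¹ a) ∉ Pos := by
  by_cases haJ : x⁻¹ a ∈ J
  · exact hB.apply_notMem_Pos_of_isLongestIn hJ hwJ haJ
  have hPhi := hB.apply_mem_Phi_of_mem_delta (inv_mem hx.1) ha
  have hneg : -x⁻¹ a ∈ Pos := (hB.notMem_Pos_iff hPhi).1 (mt h haJ)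
  have hheight : hB.heightOff J (-x⁻¹ a) ≠ 0 := fun h0 => by
    have := hB.apply_mem_Pos_of_heightOff_eq_zero hx hneg h0
    exact hB.not_both a ⟨hB.delta_sub ha, by simpa using this⟩
  have := hB.apply_mem_Pos_of_heightOff_ne_zero hJ hwJ.1 hneg hheight
  exact fun hpos => hB.not_both _ ⟨hpos, by simpa using this⟩

theorem eq_longest_mul_longest (hB : IsBase R Pos Δ) (hJ : J ⊆ Δ)
    (hwD : IsLongestIn R Δ (weylGroup R) wD) (hwJ : IsLongestIn R Δ (WsubJ R J) wJ)
    (hx : x ∈ WupJ R Pos J) (h : ∀ a ∈ Δ, x⁻¹ a ∈ Pos → x⁻¹ a ∈ J) : x = wD * wJ := by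
  have hg : wJ * x⁻¹ ∈ weylGroup R :=
    mul_mem (WsubJ_le_weylGroup (hJ.trans hB.delta_sub_Phi) hwJ.1) (inv_mem hx.1)
  have hone : wD * (wJ * x⁻¹) = 1 :=
    hB.eq_one_of_forall_apply_mem_Pos (mul_mem hwD.1 hg) fun a ha =>
      hB.apply_longest_mem_Pos hwD (hB.apply_mem_Phi_of_mem_delta hg ha)
        (hB.longest_apply_inv_apply_notMem_Pos hJ hwJ hx ha (h a ha))
  exact (mul_inv_eq_one.1 (by rwa [mul_assoc])).symm

theorem neg_longest_apply_mem_leftAscents (hB : IsBase R Pos Δ) (hJ : J ⊆ Δ)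
    (hwD : IsLongestIn R Δ (weylGroup R) wD) (hwJ : IsLongestIn R Δ (WsubJ R J) wJ) (ha : a ∈ J) :
    -wD a ∈ leftAscents Pos Δ (wD * wJ) := by
  have hwJW := WsubJ_le_weylGroup (hJ.trans hB.delta_sub_Phi) hwJ.1
  refine ⟨hB.neg_longest_apply_mem_delta hwD (hJ ha), ?_⟩
  have := (hB.notMem_Pos_iff (hB.apply_mem_Phi_of_mem_delta (inv_mem hwJW) (hJ ha))).1
    (hB.inv_apply_notMem_Pos_of_isLongestIn hJ hwJ ha)
  simpa [mul_inv_rev] using this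

theorem mul_longest_inv_mem_WsubJ (hB : IsBase R Pos Δ) (hJ : J ⊆ Δ)
    (hwD : IsLongestIn R Δ (weylGroup R) wD) (hwJ : IsLongestIn R Δ (WsubJ R J) wJ)
    (hzw : wD * wJ * w⁻¹ ∈ WsubJ R (leftAscents Pos Δ w))
    (hsub : leftAscents Pos Δ (wD * wJ) ⊆ leftAscents Pos Δ w) :
    w * wD⁻¹ ∈ WsubJ R (leftAscents Pos Δ w) := by
  have hconj : wD * wJ * wD⁻¹ ∈ WsubJ R (leftAscents Pos Δ w) :=
    mul_mul_inv_mem_WsubJ (hJ.trans hB.delta_sub_Phi) hwD.1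
      (fun a ha => hsub (hB.neg_longest_apply_mem_leftAscents hJ hwD hwJ ha)) hwJ.1
  simpa [mul_assoc] using mul_mem (inv_mem hzw) hconj

theorem neg_longest_inv_apply_mem (hB : IsBase R Pos Δ) (hwD : IsLongestIn R Δ (weylGroup R) wD)
    (hw : w ∈ VupJ R Pos Δ J) (hwwD : w * wD⁻¹ ∈ WsubJ R (leftAscents Pos Δ w))
    (he : e ∈ leftAscents Pos Δ w) : -wD⁻¹ e ∈ J := by
  have hneg : (w * wD⁻¹) e ∉ Pos := by
    rw [← inv_inv (w * wD⁻¹)]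
    refine hB.inv_apply_notMem_Pos (fun _ h => h.1) (inv_mem hwwD) (fun a ha => ?_) he
    rw [mul_inv_rev, inv_inv]
    exact hB.apply_longest_notMem_Pos hwD ha.2
  have hΔ := hB.neg_longest_inv_apply_mem_delta hwD he.1
  by_contra hJ
  refine (mem_VupJ_iff.1 hw).2 _ hΔ hJ ?_
  rw [map_neg]
  refine (hB.notMem_Pos_iff ?_).1 hneg
  exact hB.apply_mem_Phi_of_mem_delta (mul_mem hw.1.1 (inv_mem hwD.1)) he.1

theorem eq_longest_mul_longest_of_leftAscents_subset (hB : IsBase R Pos Δ) (hJ : J ⊆ Δ)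
    (hwD : IsLongestIn R Δ (weylGroup R) wD) (hwJ : IsLongestIn R Δ (WsubJ R J) wJ)
    (hw : w ∈ VupJ R Pos Δ J) (hzw : wD * wJ * w⁻¹ ∈ WsubJ R (leftAscents Pos Δ w))
    (hsub : leftAscents Pos Δ (wD * wJ) ⊆ leftAscents Pos Δ w) : w = wD * wJ := by
  have hwwD := hB.mul_longest_inv_mem_WsubJ hJ hwD hwJ hzw hsub
  have hconj : wD⁻¹ * (wD * wJ * w⁻¹) * wD⁻¹⁻¹ ∈ WsubJ R J :=
    mul_mul_inv_mem_WsubJ (fun _ ha => hB.delta_sub_Phi ha.1) (inv_mem hwD.1)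
      (fun _ he => hB.neg_longest_inv_apply_mem hwD hw hwwD he) hzw
  have hz : w⁻¹ * (wD * wJ) ∈ WsubJ R J := by
    simpa [mul_assoc] using mul_mem (mul_mem (inv_mem hwJ.1) hconj) hwJ.1
  exact hB.eq_of_inv_mul_mem_WsubJ hJ hw.1 (hB.longest_mul_longest_mem_WupJ hJ hwD hwJ) hz

end IsBase

end LongestElement

/-- Let `J ⊆ Δ`.  For each `w ∈ V^J` with `w ≠ z^J = w_Δ w_J` there exist
`w' ∈ V^J` and `s ∈ S` such that `w <_J w'`, `ℓ((sw)^J) < ℓ(w)` and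
`ℓ((sw')^J) ≥ ℓ(w')`. -/
theorem statement_7 {V : Type} [AddCommGroup V] [Module ℝ V]
    (R : RootSystemData V) (Pos Δ : Set V) (hBase : IsBase R Pos Δ)
    (J : Set V) (hJ : J ⊆ Δ)
    (pJ : (V ≃ₗ[ℝ] V) → (V ≃ₗ[ℝ] V)) (hpJ : IsProjJ R Pos J pJ)
    (wD : V ≃ₗ[ℝ] V) (hwD : IsLongestIn R Δ (weylGroup R) wD)
    (wJ : V ≃ₗ[ℝ] V) (hwJ : IsLongestIn R Δ (WsubJ R J) wJ)
    (w : V ≃ₗ[ℝ] V) (hw : w ∈ VupJ R Pos Δ J) (hne : w ≠ wD * wJ) :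
    ∃ w' ∈ VupJ R Pos Δ J, ∃ s ∈ refls R Δ,
      ltJ (refls R Δ) (len R Δ) pJ w w' ∧
      len R Δ (pJ (s * w)) < len R Δ w ∧
      len R Δ w' ≤ len R Δ (pJ (s * w')) := by
  have hE : leftAscents Pos Δ w ⊆ Δ := fun _ ha => ha.1
  obtain ⟨w', hww', hmax⟩ := hBase.exists_maximal_ascent hE hwD hw
  have hw' := hBase.mem_VupJ_of_reflTransGen hE hw hww'
  by_cases hsub : leftAscents Pos Δ w' ⊆ leftAscents Pos Δ w
  · have hw'z : w' = wD * wJ := hBase.eq_longest_mul_longest hJ hwD hwJ hw'.1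
      fun a ha hpos => hmax a (hsub ⟨ha, hpos⟩) hpos
    have hz := mul_inv_mem_WsubJ_of_reflTransGen hww'
    rw [hw'z] at hsub hz
    exact absurd (hBase.eq_longest_mul_longest_of_leftAscents_subset hJ hwD hwJ hw hz hsub) hne
  · obtain ⟨d, ⟨hd, hdw'⟩, hdE⟩ := Set.not_subset.1 hsub
    have hdw : w⁻¹ d ∉ Pos := fun h => hdE ⟨hd, h⟩
    have htrans := (Relation.reflTransGen_iff_eq_or_transGen.1 hww').resolve_left
      fun h => hdw (h ▸ hdw')
    exact ⟨w', hw', R.refl d, ⟨d, hd, rfl⟩, hBase.ltJ_of_transGen hJ hpJ hE hw htrans,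
      hBase.len_pJ_refl_mul_lt hJ hpJ hw.1 hd hdw, hBase.le_len_pJ_refl_mul hJ hpJ hw'.1 hd hdw'⟩

end PaperSp
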